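/- arXiv:1204.1782 — 3 statements merged into one kernel-verified Lean document; each statement's English description precedes it below -/
import Mathlib

section
/- Let λ ∈ ℝ. The function F(x₁,x₂) = (x₂ − x₁²)/(x₂ + λ² − 2λx₁) is concave on the convex set D = {(x₁,x₂) ∈ ℝ² : x₁ < λ, x₂ ≥ x₁²}. (Note that on D the denominator x₂ + λ² − 2λx₁ = (x₂ − x₁²) + (λ − x₁)² is strictly positive.) -/
/-!
With `u = lam - x₁` and `d = x₂ + lam² - 2 lam x₁ = (x₂ - x₁²) + u²`, the function is
`1 - u² / d`, where `u` and `d` are affine in `(x₁, x₂)` and `d > 0` on the domain.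
Concavity follows from joint convexity of `u² / d` on `d > 0`: this perspective function is
the supremum over `t` of the linear functions `2 t u - t² d`, attained at `t = u / d`.
-/

lemma linear_le_sq_div (t u d : ℝ) (hd : 0 < d) : 2 * t * u - t ^ 2 * d ≤ u ^ 2 / d := by
  rw [le_div_iff₀ hd]
  nlinarith [sq_nonneg (u - t * d)]

/-- The function `F(x₁,x₂) = (x₂ - x₁²)/(x₂ + λ² - 2λx₁)` is concave on the
convex set `D = {(x₁,x₂) : x₁ < λ, x₂ ≥ x₁²}`. -/
theorem concave_main_piece (lam : ℝ) :
    ConcaveOn ℝ {p : ℝ × ℝ | p.1 < lam ∧ p.1 ^ 2 ≤ p.2}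
      (fun p : ℝ × ℝ => (p.2 - p.1 ^ 2) / (p.2 + lam ^ 2 - 2 * lam * p.1)) := by
  have hpos : ∀ x y : ℝ, x < lam → x ^ 2 ≤ y → 0 < y + lam ^ 2 - 2 * lam * x := by
    intro x y hx hy
    nlinarith [pow_pos (sub_pos.2 hx) 2]
  have hF : ∀ x y : ℝ, x < lam → x ^ 2 ≤ y →
      (y - x ^ 2) / (y + lam ^ 2 - 2 * lam * x)
        = 1 - (lam - x) ^ 2 / (y + lam ^ 2 - 2 * lam * x) := by
    intro x y hx hy
    have h := (hpos x y hx hy).ne'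
    rw [eq_sub_iff_add_eq, ← add_div, div_eq_one_iff_eq h]
    ring
  have hconv : Convex ℝ {p : ℝ × ℝ | p.1 < lam ∧ p.1 ^ 2 ≤ p.2} := by
    rintro ⟨x, y⟩ ⟨hx, hy⟩ ⟨z, w⟩ ⟨hz, hw⟩ a b ha hb hab
    refine ⟨convex_Iio lam hx hz ha hb hab, ?_⟩
    simp only [Prod.smul_mk, Prod.mk_add_mk, smul_eq_mul] at *
    obtain rfl : b = 1 - a := by linarith
    nlinarith [mul_nonneg (mul_nonneg ha hb) (sq_nonneg (x - z)),
      mul_le_mul_of_nonneg_left hy ha, mul_le_mul_of_nonneg_left hw hb]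
  refine ⟨hconv, ?_⟩
  rintro ⟨x, y⟩ hp ⟨z, w⟩ hq a b ha hb hab
  obtain ⟨hX, hY⟩ := hconv hp hq ha hb hab
  obtain ⟨hx, hy⟩ := hp
  obtain ⟨hz, hw⟩ := hq
  simp only [Prod.smul_mk, Prod.mk_add_mk, smul_eq_mul] at *
  rw [hF _ _ hx hy, hF _ _ hz hw, hF _ _ hX hY]
  have hD := hpos _ _ hX hY
  set D := a * y + b * w + lam ^ 2 - 2 * lam * (a * x + b * z) with hDdef
  set U := lam - (a * x + b * z) with hUdef
  -- the maximizing slope at the convex combination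
  set t := U / D with ht
  have h1 := mul_le_mul_of_nonneg_left
    (linear_le_sq_div t (lam - x) _ (hpos _ _ hx hy)) ha
  have h2 := mul_le_mul_of_nonneg_left
    (linear_le_sq_div t (lam - z) _ (hpos _ _ hz hw)) hb
  have hmax : U ^ 2 / D = 2 * t * U - t ^ 2 * D := by
    rw [ht]
    field_simp
    ring
  have hU : U = a * (lam - x) + b * (lam - z) := by
    linear_combination hUdef - lam * hab
  have hDc : D = a * (y + lam ^ 2 - 2 * lam * x) + b * (w + lam ^ 2 - 2 * lam * z) := by
    linear_combination hDdef - lam ^ 2 * hab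
  have hlin : 2 * t * U - t ^ 2 * D
      = a * (2 * t * (lam - x) - t ^ 2 * (y + lam ^ 2 - 2 * lam * x))
        + b * (2 * t * (lam - z) - t ^ 2 * (w + lam ^ 2 - 2 * lam * z)) := by
    linear_combination 2 * t * hU - t ^ 2 * hDc
  linarith
end

section
/- Let ε > 0 and λ ∈ ℝ, and define on the open set U = {(x₁,x₂) ∈ ℝ² : x₁² < x₂ < x₁² + ε²} the function F(x₁,x₂) = (e/2)·(1 − √(1 − (x₂ − x₁²)/ε²))·exp((x₁ − λ)/ε + √(1 − (x₂ − x₁²)/ε²)). Then F is twice differentiable on U and at every point of U its Hessian matrix is negative semidefinite: for all (h₁,h₂) ∈ ℝ², h₁²·∂²F/∂x₁² + 2h₁h₂·∂²F/∂x₁∂x₂ + h₂²·∂²F/∂x₂² ≤ 0. -/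
open Set Real

/-!
Write `s = √(1 - (x₂ - x₁²)/ε²)` and `E = exp((x₁ - λ)/ε + s)`, so that `F = (e/2)(1 - s)E` and
`0 < s` on the strip. From `s² = 1 - (x₂ - x₁²)/ε²` one gets `∂₁s = x₁/(ε² s)` and
`∂₂s = -1/(2ε² s)`. In the product rule the terms `±E ds` cancel, so the gradient has no `1/s`:
`∂₁F = (e/2)E((1 - s)/ε - x₁/ε²)` and `∂₂F = (e/2)E/(2ε²)`. Differentiating once more, the Hessian
turns out to have rank one:
`D²F(h, h) = -(e/2)(E/s)((x₁/ε + s)h₁/ε - h₂/(2ε²))² ≤ 0`.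
The lemmas `hasFDerivAt_pieceRoot`, `hasFDerivAt_pieceExp` and `hasFDerivAt_piece` carry these
computations.
-/

/-- The square root `s = √(1 - (x₂ - x₁²)/ε²)`. -/
noncomputable def pieceRoot (ε : ℝ) (p : ℝ × ℝ) : ℝ :=
  Real.sqrt (1 - (p.2 - p.1 ^ 2) / ε ^ 2)

/-- The exponential factor `E = exp((x₁ - λ)/ε + s)`. -/
noncomputable def pieceExp (ε lam : ℝ) (p : ℝ × ℝ) : ℝ :=
  Real.exp ((p.1 - lam) / ε + pieceRoot ε p)

/-- The linear form `(h₁, h₂) ↦ a h₁ + b h₂`, used to record a gradient `(a, b)`. -/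
noncomputable def gradForm (a b : ℝ) : ℝ × ℝ →L[ℝ] ℝ :=
  a • ContinuousLinearMap.fst ℝ ℝ ℝ + b • ContinuousLinearMap.snd ℝ ℝ ℝ

lemma gradForm_apply (a b : ℝ) (h : ℝ × ℝ) : gradForm a b h = a * h.1 + b * h.2 := by
  simp [gradForm]

lemma radicand_pos {ε : ℝ} (hε : 0 < ε) {p : ℝ × ℝ} (hp : p.2 < p.1 ^ 2 + ε ^ 2) :
    0 < 1 - (p.2 - p.1 ^ 2) / ε ^ 2 := by
  rw [sub_pos, div_lt_one (by positivity)]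
  linarith

lemma pieceRoot_pos {ε : ℝ} (hε : 0 < ε) {p : ℝ × ℝ} (hp : p.2 < p.1 ^ 2 + ε ^ 2) :
    0 < pieceRoot ε p :=
  Real.sqrt_pos.2 (radicand_pos hε hp)

lemma hasFDerivAt_pieceRoot {ε : ℝ} (hε : 0 < ε) {p : ℝ × ℝ} (hp : p.2 < p.1 ^ 2 + ε ^ 2) :
    HasFDerivAt (pieceRoot ε)
      (gradForm (p.1 / (ε ^ 2 * pieceRoot ε p)) (-1 / (2 * ε ^ 2 * pieceRoot ε p))) p := by
  have hs := pieceRoot_pos hε hp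
  have h1 : HasFDerivAt (fun q : ℝ × ℝ => q.1) (ContinuousLinearMap.fst ℝ ℝ ℝ) p := hasFDerivAt_fst
  have h2 : HasFDerivAt (fun q : ℝ × ℝ => q.2) (ContinuousLinearMap.snd ℝ ℝ ℝ) p := hasFDerivAt_snd
  have h := (((h2.sub (h1.pow 2)).mul_const (ε ^ 2)⁻¹).const_sub 1).sqrt
    (by simpa [div_eq_mul_inv] using (radicand_pos hε hp).ne')
  refine (h.congr_fderiv ?_).congr_of_eventuallyEq (.of_forall fun q => ?_)
  · have hr : √(1 - (p.2 - p.1 ^ 2) * (ε ^ 2)⁻¹) = pieceRoot ε p := by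
      rw [pieceRoot, div_eq_mul_inv]
    ext <;> simp [gradForm_apply, hr] <;> field_simp
  · simp [pieceRoot, div_eq_mul_inv]

lemma hasFDerivAt_pieceExp {ε : ℝ} (lam : ℝ) (hε : 0 < ε) {p : ℝ × ℝ}
    (hp : p.2 < p.1 ^ 2 + ε ^ 2) :
    HasFDerivAt (pieceExp ε lam)
      (gradForm (pieceExp ε lam p * (1 / ε + p.1 / (ε ^ 2 * pieceRoot ε p)))
        (pieceExp ε lam p * (-1 / (2 * ε ^ 2 * pieceRoot ε p)))) p := by
  have h1 : HasFDerivAt (fun q : ℝ × ℝ => q.1) (ContinuousLinearMap.fst ℝ ℝ ℝ) p := hasFDerivAt_fst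
  have h := (((h1.sub_const lam).mul_const ε⁻¹).add (hasFDerivAt_pieceRoot hε hp)).exp
  refine (h.congr_fderiv ?_).congr_of_eventuallyEq (.of_forall fun q => ?_)
  · ext <;> simp [gradForm_apply, pieceExp, div_eq_mul_inv, mul_add]
  · simp [pieceExp, div_eq_mul_inv]

/-- The gradient of `F`: the terms `±E ds` coming from the two factors cancel, and the remaining
`s ds` is polynomial. -/
lemma hasFDerivAt_piece {ε : ℝ} (lam : ℝ) (hε : 0 < ε) {p : ℝ × ℝ}
    (hp : p.2 < p.1 ^ 2 + ε ^ 2) :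
    HasFDerivAt (fun q => Real.exp 1 / 2 * (1 - pieceRoot ε q) * pieceExp ε lam q)
      (gradForm
        (Real.exp 1 / 2 * (pieceExp ε lam p * ((1 - pieceRoot ε p) / ε - p.1 / ε ^ 2)))
        (Real.exp 1 / 2 * (pieceExp ε lam p * (1 / (2 * ε ^ 2))))) p := by
  have hs := pieceRoot_pos hε hp
  have h := (((hasFDerivAt_pieceRoot hε hp).const_sub 1).const_mul (Real.exp 1 / 2)).mul
    (hasFDerivAt_pieceExp lam hε hp)
  refine h.congr_fderiv ?_
  ext <;> simp [gradForm_apply] <;> field_simp <;> ring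

/-- The derivative of `∂₁F`. -/
lemma hasFDerivAt_piece_fst {ε : ℝ} (lam : ℝ) (hε : 0 < ε) {p : ℝ × ℝ}
    (hp : p.2 < p.1 ^ 2 + ε ^ 2) :
    HasFDerivAt
      (fun q => Real.exp 1 / 2 * (pieceExp ε lam q * ((1 - pieceRoot ε q) / ε - q.1 / ε ^ 2)))
      (gradForm
        (-(Real.exp 1 / 2 * pieceExp ε lam p / pieceRoot ε p * ((p.1 / ε + pieceRoot ε p) / ε) ^ 2))
        (Real.exp 1 / 2 * pieceExp ε lam p / pieceRoot ε p * ((p.1 / ε + pieceRoot ε p) / ε)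
          * (1 / (2 * ε ^ 2)))) p := by
  have hs := pieceRoot_pos hε hp
  have h1 : HasFDerivAt (fun q : ℝ × ℝ => q.1) (ContinuousLinearMap.fst ℝ ℝ ℝ) p := hasFDerivAt_fst
  have h := ((hasFDerivAt_pieceExp lam hε hp).mul
    ((((hasFDerivAt_pieceRoot hε hp).const_sub 1).mul_const ε⁻¹).sub
      (h1.mul_const (ε ^ 2)⁻¹))).const_mul (Real.exp 1 / 2)
  refine (h.congr_fderiv ?_).congr_of_eventuallyEq (.of_forall fun q => ?_)
  · ext <;> simp [gradForm_apply] <;> field_simp <;> ring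
  · simp [div_eq_mul_inv]

/-- The derivative of `∂₂F`. -/
lemma hasFDerivAt_piece_snd {ε : ℝ} (lam : ℝ) (hε : 0 < ε) {p : ℝ × ℝ}
    (hp : p.2 < p.1 ^ 2 + ε ^ 2) :
    HasFDerivAt
      (fun q => Real.exp 1 / 2 * (pieceExp ε lam q * (1 / (2 * ε ^ 2))))
      (gradForm
        (Real.exp 1 / 2 * pieceExp ε lam p / pieceRoot ε p * ((p.1 / ε + pieceRoot ε p) / ε)
          * (1 / (2 * ε ^ 2)))
        (-(Real.exp 1 / 2 * pieceExp ε lam p / pieceRoot ε p * (1 / (2 * ε ^ 2)) ^ 2))) p := by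
  have hs := pieceRoot_pos hε hp
  have h := ((hasFDerivAt_pieceExp lam hε hp).mul_const (1 / (2 * ε ^ 2))).const_mul
    (Real.exp 1 / 2)
  refine h.congr_fderiv ?_
  ext <;> simp [gradForm_apply] <;> field_simp
  ring

/-- The function
`F(x₁,x₂) = (e/2)·(1 - √(1 - (x₂-x₁²)/ε²))·exp((x₁-λ)/ε + √(1 - (x₂-x₁²)/ε²))`
is twice differentiable on the open strip `U = {x₁² < x₂ < x₁² + ε²}` and its Hessian
is negative semidefinite there. -/
theorem hessian_exp_piece_nonpos (ε lam : ℝ) (hε : 0 < ε) :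
    let U : Set (ℝ × ℝ) := {p : ℝ × ℝ | p.1 ^ 2 < p.2 ∧ p.2 < p.1 ^ 2 + ε ^ 2}
    let F : ℝ × ℝ → ℝ := fun p =>
      Real.exp 1 / 2 * (1 - Real.sqrt (1 - (p.2 - p.1 ^ 2) / ε ^ 2)) *
        Real.exp ((p.1 - lam) / ε + Real.sqrt (1 - (p.2 - p.1 ^ 2) / ε ^ 2))
    (∀ p ∈ U, ContDiffAt ℝ 2 F p) ∧
    ∀ p ∈ U, ∀ h₁ h₂ : ℝ,
      h₁ ^ 2 * fderiv ℝ (fun q => fderiv ℝ F q (1, 0)) p (1, 0)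
        + 2 * h₁ * h₂ * fderiv ℝ (fun q => fderiv ℝ F q (1, 0)) p (0, 1)
        + h₂ ^ 2 * fderiv ℝ (fun q => fderiv ℝ F q (0, 1)) p (0, 1) ≤ 0 := by
  intro U F
  refine ⟨fun p hp => ?_, fun p hp h₁ h₂ => ?_⟩
  · have hs : ContDiffAt ℝ 2 (fun q : ℝ × ℝ => √(1 - (q.2 - q.1 ^ 2) / ε ^ 2)) p :=
      ContDiffAt.sqrt (by fun_prop) (radicand_pos hε hp.2).ne'
    exact (contDiffAt_const.mul (contDiffAt_const.sub hs)).mul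
      (ContDiffAt.exp (ContDiffAt.add (by fun_prop) hs))
  · -- The gradient formula holds in a neighbourhood of `p`, hence may be differentiated at `p`.
    have hU : ∀ᶠ q : ℝ × ℝ in nhds p, q.2 < q.1 ^ 2 + ε ^ 2 :=
      (isOpen_lt (by fun_prop) (by fun_prop)).mem_nhds hp.2
    have e1 : (fun q => fderiv ℝ F q (1, 0)) =ᶠ[nhds p] fun q =>
        Real.exp 1 / 2 * (pieceExp ε lam q * ((1 - pieceRoot ε q) / ε - q.1 / ε ^ 2)) := by
      filter_upwards [hU] with q hq
      have := (hasFDerivAt_piece lam hε hq).fderiv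
      change fderiv ℝ F q = _ at this
      rw [this, gradForm_apply]
      simp
    have e2 : (fun q => fderiv ℝ F q (0, 1)) =ᶠ[nhds p] fun q =>
        Real.exp 1 / 2 * (pieceExp ε lam q * (1 / (2 * ε ^ 2))) := by
      filter_upwards [hU] with q hq
      have := (hasFDerivAt_piece lam hε hq).fderiv
      change fderiv ℝ F q = _ at this
      rw [this, gradForm_apply]
      simp
    rw [e1.fderiv_eq, e2.fderiv_eq, (hasFDerivAt_piece_fst lam hε hp.2).fderiv,
      (hasFDerivAt_piece_snd lam hε hp.2).fderiv]
    simp only [gradForm_apply]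
    have hs := pieceRoot_pos hε hp.2
    have hE : 0 < pieceExp ε lam p := Real.exp_pos _
    have hc : 0 ≤ Real.exp 1 / 2 * pieceExp ε lam p / pieceRoot ε p := by positivity
    have key := mul_nonneg hc
      (sq_nonneg ((p.1 / ε + pieceRoot ε p) / ε * h₁ - 1 / (2 * ε ^ 2) * h₂))
    linarith only [key]
end

section
/- Let ε > 0 and λ > 2ε, and let B : Ω_ε → ℝ be defined piecewise by: B(x) = 1 on Ω₁ = {x ∈ Ω_ε : |x₁| ≥ λ, and x₂ ≤ 2(λ+ε)|x₁| − λ² − 2ελ whenever |x₁| < λ+ε}; B(x) = 1 − (x₂ − 2(λ+ε)|x₁| + λ² + 2ελ)/(8ε²) on Ω₂ = {x ∈ Ω_ε : λ−ε ≤ |x₁| ≤ λ+ε, x₂ ≥ 2λ|x₁| − λ² + 2ε·||x₁| − λ|}; B(x) = (x₂ − x₁²)/(x₂ + λ² − 2λ|x₁|) on Ω₃ = {x ∈ Ω_ε : x₂ < 2(λ−ε)|x₁| − λ² + 2ελ}; B(x) = (e/2)·(1 − √(1 − (x₂ − x₁²)/ε²))·exp((|x₁| − λ)/ε + √(1 −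 (x₂ − x₁²)/ε²)) on Ω₄ = {x ∈ Ω_ε : x₂ ≥ 2(λ−ε)|x₁| − λ² + 2ελ, and x₂ ≤ 2ε|x₁| whenever |x₁| ≤ ε}; and B(x) = (x₂/(4ε²))·exp(2 − λ/ε) on Ω₅ = {x ∈ Ω_ε : |x₁| ≤ ε, x₂ ≥ 2ε|x₁|}. Then B is locally concave on Ω_ε: whenever x⁻, x⁺ ∈ Ω_ε are such that the straight segment [x⁻,x⁺] lies entirely in Ω_ε, one has B(αx⁺ + (1−α)x⁻) ≥ αB(x⁺) + (1−α)B(x⁻) for all α ∈ [0,1]. -/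
/-!
The proof exhibits, at each point `x` of the strip, an affine function that agrees with `B` at `x`
and dominates `B` at every point `y` for which the segment `[x, y]` stays in the strip
(`exists_support`). Applied at an interior point of a segment, this is the concavity inequality.
As `B` is even in the first coordinate, it is enough to take `x` with nonnegative abscissa.

On `Ω₁` the affine function is the constant `1`, and on `Ω₂` it is the formula for `B` there. On the
other regions it belongs to one family `K(b) * (x₂ - 2 b x₁ + b²)`, with
`K(b) = exp (2 - lam / ε) / (4 ε²) * exp (b / ε)` for `0 ≤ b ≤ lam - 2ε` and
`K(b) = 1 / (lam - b)²` for `lam - 2ε ≤ b < lam`. On `Ω₅` the index is `b = 0`, on `Ω₄` the support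
line is the tangent to the upper parabola at abscissa `b + ε`, and on `Ω₃` it is the chord of the
lower parabola from abscissa `b` to `lam`.

At a fixed point `y` the planes are compared by studying their dependence on `b`. The rational part
is a quadratic polynomial in `1 / (lam - b)`, which bounds `B` on the whole right half of the strip
(`bound_rational`). For the exponential part (`phi`), the derivative in `b` has the sign of
`(y₁ - b - ε)² - r²` with `r² = ε² - (y₂ - y₁²)`, so the value decreases between
`b = y₁ - ε - r` and `b = y₁ - ε + r` and increases afterwards; hence the plane of index `b` bounds
`B` as long as `y₁ - b ≤ ε + r` (`bound_exp`). That condition is what visibility provides: a segment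
that starts above a tangent to the upper parabola has to be below it beyond the point of tangency
(`vis_right`, `vis_left`).
-/

open Set Real
open scoped Classical

/-- The parabolic strip `Ω_ε`. -/
def strip (ε : ℝ) : Set (ℝ × ℝ) :=
  {p : ℝ × ℝ | p.1 ^ 2 ≤ p.2 ∧ p.2 ≤ p.1 ^ 2 + ε ^ 2}

/-- The candidate Bellman function for the case `λ > 2ε`, defined piecewise on the five
subdomains `Ω₁, …, Ω₅` (which cover `Ω_ε`, the formulas agreeing on overlaps). -/
noncomputable def Bfun (ε lam : ℝ) (p : ℝ × ℝ) : ℝ :=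
  if lam ≤ |p.1| ∧
      (|p.1| < lam + ε → p.2 ≤ 2 * (lam + ε) * |p.1| - lam ^ 2 - 2 * ε * lam) then
    1
  else if lam - ε ≤ |p.1| ∧ |p.1| ≤ lam + ε ∧
      2 * lam * |p.1| - lam ^ 2 + 2 * ε * |(|p.1| - lam)| ≤ p.2 then
    1 - (p.2 - 2 * (lam + ε) * |p.1| + lam ^ 2 + 2 * ε * lam) / (8 * ε ^ 2)
  else if p.2 < 2 * (lam - ε) * |p.1| - lam ^ 2 + 2 * ε * lam then
    (p.2 - p.1 ^ 2) / (p.2 + lam ^ 2 - 2 * lam * |p.1|)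
  else if 2 * (lam - ε) * |p.1| - lam ^ 2 + 2 * ε * lam ≤ p.2 ∧
      (|p.1| ≤ ε → p.2 ≤ 2 * ε * |p.1|) then
    Real.exp 1 / 2 * (1 - Real.sqrt (1 - (p.2 - p.1 ^ 2) / ε ^ 2)) *
      Real.exp ((|p.1| - lam) / ε + Real.sqrt (1 - (p.2 - p.1 ^ 2) / ε ^ 2))
  else if |p.1| ≤ ε ∧ 2 * ε * |p.1| ≤ p.2 then
    p.2 / (4 * ε ^ 2) * Real.exp (2 - lam / ε)
  else 0

/-! ### Reflection and visibility -/

theorem Bfun_neg (ε lam a b : ℝ) : Bfun ε lam (-a, b) = Bfun ε lam (a, b) := by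
  simp only [Bfun, abs_neg, neg_sq]

/-- `y` is visible from `x`: the segment from `x` to `y` stays in the strip. -/
def Vis (ε x1 x2 y1 y2 : ℝ) : Prop :=
  ∀ τ : ℝ, 0 ≤ τ → τ ≤ 1 → (x1 + τ * (y1 - x1), x2 + τ * (y2 - x2)) ∈ strip ε

/-- A segment of the strip that starts on or above the tangent to the upper parabola at abscissa
`a`, on the left of the point of tangency, is below that tangent once it has passed `a`. -/
theorem vis_right {ε x1 x2 y1 y2 : ℝ} (a : ℝ) (h : Vis ε x1 x2 y1 y2)
    (hx : 0 ≤ x2 - 2 * a * x1 + a ^ 2 - ε ^ 2) (hxa : x1 ≤ a) (hay : a ≤ y1) :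
    y2 - 2 * a * y1 + a ^ 2 - ε ^ 2 ≤ 0 := by
  rcases hxa.lt_or_eq with hlt | heq
  · have hpos : 0 < y1 - x1 := by linarith
    -- the point of the segment with abscissa `a` is not above the upper parabola
    have h1 := (h ((a - x1) / (y1 - x1)) (by apply div_nonneg <;> linarith)
      (by rw [div_le_one hpos]; linarith)).2
    simp only at h1
    have e1 : (a - x1) / (y1 - x1) * (y1 - x1) = a - x1 := by field_simp
    set θ := (a - x1) / (y1 - x1) with hθ
    have hθ0 : 0 < θ := by apply div_pos <;> linarith
    have hθ1 : θ ≤ 1 := by rw [hθ, div_le_one hpos]; linarith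
    rw [e1] at h1
    by_contra hc
    push Not at hc
    have := mul_pos hθ0 hc
    have h3 := mul_nonneg (sub_nonneg.2 hθ1) hx
    have e2 : (1 - θ) * (x2 - 2 * a * x1 + a ^ 2 - ε ^ 2)
        + θ * (y2 - 2 * a * y1 + a ^ 2 - ε ^ 2)
        = x2 + θ * (y2 - x2) - 2 * a * (x1 + θ * (y1 - x1)) + a ^ 2 - ε ^ 2 := by ring
    rw [e1] at e2
    nlinarith
  · subst heq
    have h0 := (h 0 le_rfl zero_le_one).2
    simp only at h0
    have hx2 : x2 = x1 ^ 2 + ε ^ 2 := by nlinarith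
    by_contra hc
    push Not at hc
    set T := y2 - 2 * x1 * y1 + x1 ^ 2 - ε ^ 2 with hT
    -- the segment leaves a point of the upper parabola, so its slope there is at most `2 * x1`
    have key : ∀ τ : ℝ, 0 < τ → τ ≤ 1 → T ≤ τ * (y1 - x1) ^ 2 := by
      intro τ h1 h2
      have h3 := (h τ h1.le h2).2
      simp only at h3
      have : τ * T ≤ τ * (τ * (y1 - x1) ^ 2) := by
        rw [hT]; subst hx2; nlinarith
      exact le_of_mul_le_mul_left this h1
    have k1 := key (T / (T + (y1 - x1) ^ 2)) (by positivity)
      (by rw [div_le_one (by positivity)]; nlinarith [sq_nonneg (y1 - x1)])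
    have hp : 0 < T + (y1 - x1) ^ 2 := by positivity
    rw [div_mul_eq_mul_div, le_div_iff₀ hp] at k1
    nlinarith

theorem vis_neg {ε x1 x2 y1 y2 : ℝ} (h : Vis ε x1 x2 y1 y2) : Vis ε (-x1) x2 (-y1) y2 := by
  intro τ h0 h1
  have := h τ h0 h1
  simp only [strip, mem_ofPred_eq] at this ⊢
  have e : (-x1 + τ * (-y1 - -x1)) ^ 2 = (x1 + τ * (y1 - x1)) ^ 2 := by ring
  rw [e]; exact this

theorem vis_left {ε x1 x2 y1 y2 : ℝ} (a : ℝ) (h : Vis ε x1 x2 y1 y2)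
    (hx : 0 ≤ x2 - 2 * a * x1 + a ^ 2 - ε ^ 2) (hxa : a ≤ x1) (hay : y1 ≤ a) :
    y2 - 2 * a * y1 + a ^ 2 - ε ^ 2 ≤ 0 := by
  have := vis_right (-a) (vis_neg h) (by nlinarith) (by linarith) (by linarith)
  nlinarith

/-! ### The family of supporting planes -/

/-- Up to a constant factor, the tangent plane of `B` along the tangent to the upper parabola at
abscissa `b + ε`, evaluated at the point with abscissa `y` and height `w` above the lower
parabola; it is affine in `(y, w + y ^ 2)`. -/
noncomputable def phi (ε w y b : ℝ) : ℝ := Real.exp (b / ε) * (w + (y - b) ^ 2)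

theorem phi_hasDerivAt {ε : ℝ} (hε : 0 < ε) (w y b : ℝ) :
    HasDerivAt (phi ε w y)
      (Real.exp (b / ε) / ε * ((y - b - ε) ^ 2 - (ε ^ 2 - w))) b := by
  have h1 : HasDerivAt (fun b : ℝ => Real.exp (b / ε)) (Real.exp (b / ε) * (1 / ε)) b :=
    ((hasDerivAt_id b).div_const ε).exp
  have h2 : HasDerivAt (fun b : ℝ => w + (y - b) ^ 2) (2 * (y - b) * (-1)) b := by
    have := (((hasDerivAt_id b).const_sub y).pow 2).const_add w
    simpa using this
  have := h1.mul h2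
  refine this.congr_deriv ?_
  field_simp
  ring

theorem phi_anti {ε w y r b b' : ℝ} (hε : 0 < ε) (hr : r ^ 2 = ε ^ 2 - w)
    (h1 : y - ε - r ≤ b) (hb : b ≤ b') (h2 : b' ≤ y - ε + r) :
    phi ε w y b' ≤ phi ε w y b := by
  have hd := fun b => phi_hasDerivAt hε w y b
  have : AntitoneOn (phi ε w y) (Icc b b') := by
    apply antitoneOn_of_deriv_nonpos (convex_Icc _ _)
    · exact fun z _ => (hd z).continuousAt.continuousWithinAt
    · exact fun z _ => (hd z).differentiableAt.differentiableWithinAt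
    · intro z hz
      rw [interior_Icc] at hz
      rw [(hd z).deriv, ← hr]
      apply mul_nonpos_of_nonneg_of_nonpos (by positivity)
      have := hz.1; have := hz.2
      nlinarith
  exact this ⟨le_rfl, hb⟩ ⟨hb, le_rfl⟩ hb

theorem phi_mono {ε w y r b b' : ℝ} (hε : 0 < ε) (hr : r ^ 2 = ε ^ 2 - w) (hr0 : 0 ≤ r)
    (h1 : y - ε + r ≤ b) (hb : b ≤ b') :
    phi ε w y b ≤ phi ε w y b' := by
  have hd := fun b => phi_hasDerivAt hε w y b
  have : MonotoneOn (phi ε w y) (Icc b b') := by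
    apply monotoneOn_of_deriv_nonneg (convex_Icc _ _)
    · exact fun z _ => (hd z).continuousAt.continuousWithinAt
    · exact fun z _ => (hd z).differentiableAt.differentiableWithinAt
    · intro z hz
      rw [interior_Icc] at hz
      rw [(hd z).deriv, ← hr]
      apply mul_nonneg (by positivity)
      have := hz.1; have := hz.2
      nlinarith
  exact this ⟨le_rfl, hb⟩ ⟨hb, le_rfl⟩ hb

/-- The factor in front of `phi` in the tangent planes. -/
noncomputable def cc (ε lam : ℝ) : ℝ := Real.exp (2 - lam / ε) / (4 * ε ^ 2)

theorem cc_pos {ε : ℝ} (hε : 0 < ε) (lam : ℝ) : 0 < cc ε lam := by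
  unfold cc; positivity

/-- At `b = lam - 2ε` the exponential planes meet the rational ones. -/
theorem cc_phi {ε : ℝ} (hε : 0 < ε) (lam w y : ℝ) :
    cc ε lam * phi ε w y (lam - 2 * ε) = (w + (y - (lam - 2 * ε)) ^ 2) / (4 * ε ^ 2) := by
  unfold cc phi
  have : Real.exp (2 - lam / ε) * Real.exp ((lam - 2 * ε) / ε) = 1 := by
    rw [← Real.exp_add, Real.exp_eq_one_iff]; field_simp; ring
  rw [div_mul_eq_mul_div, ← mul_assoc, this, one_mul]

/-! ### The five regions in the right half of the strip -/

/-- The value of `B` at a point with nonnegative abscissa, in usable form. The fourth alternative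
covers both `Ω₄`, where `b = y1 - ε + r`, and `Ω₅`, where `b = 0`. -/
theorem Bfun_cases {ε lam y1 y2 r : ℝ} (hε : 0 < ε) (hlam : 2 * ε < lam)
    (hy : (y1, y2) ∈ strip ε) (hy1 : 0 ≤ y1) (hr0 : 0 ≤ r)
    (hr : r ^ 2 = ε ^ 2 - (y2 - y1 ^ 2)) :
    (Bfun ε lam (y1, y2) = 1 ∧ lam ≤ y1 ∧
      (y1 < lam + ε → y2 - 2 * (lam + ε) * y1 + lam ^ 2 + 2 * ε * lam ≤ 0)) ∨
    (Bfun ε lam (y1, y2) =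
        1 - (y2 - 2 * (lam + ε) * y1 + lam ^ 2 + 2 * ε * lam) / (8 * ε ^ 2) ∧
      lam - ε ≤ y1 ∧ y1 ≤ lam + ε ∧ 0 ≤ y2 - 2 * (lam - ε) * y1 + lam ^ 2 - 2 * ε * lam ∧
      0 ≤ y2 - 2 * (lam + ε) * y1 + lam ^ 2 + 2 * ε * lam) ∨
    (Bfun ε lam (y1, y2) = (y2 - y1 ^ 2) / (y2 + lam ^ 2 - 2 * lam * y1) ∧
      y2 - 2 * (lam - ε) * y1 + lam ^ 2 - 2 * ε * lam < 0 ∧ y1 < lam) ∨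
    (∃ b, 0 ≤ b ∧ b ≤ lam - 2 * ε ∧
      Bfun ε lam (y1, y2) = cc ε lam * phi ε (y2 - y1 ^ 2) y1 b ∧ y1 ≤ lam - ε ∧
      0 ≤ y2 - 2 * (lam - ε) * y1 + lam ^ 2 - 2 * ε * lam ∧
      y1 - ε + r ≤ b ∧ (b = 0 ∨ b = y1 - ε + r)) := by
  have hy' := hy
  simp only [strip, mem_ofPred_eq] at hy'
  obtain ⟨hyl, hyu⟩ := hy'
  simp only [Bfun, abs_of_nonneg hy1]
  split_ifs with h1 h2 h3 h4 h5
  · left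
    exact ⟨rfl, h1.1, fun h => by linarith [h1.2 h]⟩
  · right; left
    obtain ⟨ha, hb, hc⟩ := h2
    refine ⟨rfl, ha, hb, ?_, ?_⟩
    · nlinarith [neg_abs_le (y1 - lam)]
    · nlinarith [le_abs_self (y1 - lam)]
  · right; right; left
    refine ⟨rfl, by linarith, ?_⟩
    by_contra hc
    push Not at hc
    apply h1
    refine ⟨hc, fun _ => ?_⟩
    nlinarith
  · right; right; right
    have hya : y1 ≤ lam - ε := by
      by_contra hc
      push Not at hc
      rcases le_total y1 lam with hl | hl
      · apply h2
        refine ⟨hc.le, by linarith, ?_⟩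
        rw [abs_of_nonpos (by linarith)]; linarith
      · push Not at h1
        obtain ⟨g1, g2⟩ := h1 hl
        apply h2
        refine ⟨hc.le, by linarith, ?_⟩
        rw [abs_of_nonneg (by linarith)]; linarith
    have hT0 : 0 ≤ y2 - 2 * (lam - ε) * y1 + lam ^ 2 - 2 * ε * lam := by linarith
    have hs : Real.sqrt (1 - (y2 - y1 ^ 2) / ε ^ 2) = r / ε := by
      rw [show 1 - (y2 - y1 ^ 2) / ε ^ 2 = (r / ε) ^ 2 by
        rw [div_pow, hr]; field_simp]
      exact Real.sqrt_sq (by positivity)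
    refine ⟨y1 - ε + r, ?_, ?_, ?_, hya, hT0, le_rfl, Or.inr rfl⟩
    · by_cases hy1e : y1 ≤ ε
      · have := h4.2 hy1e
        have : ε - y1 ≤ r := abs_le_of_sq_le_sq' (by nlinarith) hr0 |>.2
        linarith
      · linarith
    · have : r ≤ lam - ε - y1 := abs_le_of_sq_le_sq' (by nlinarith) (by linarith) |>.2
      linarith
    · rw [hs]
      have hw : y2 - y1 ^ 2 = ε ^ 2 - r ^ 2 := by linarith
      have he : Real.exp (2 - lam / ε) * Real.exp ((y1 - ε + r) / ε)
          = Real.exp 1 * Real.exp ((y1 - lam) / ε + r / ε) := by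
        rw [← Real.exp_add, ← Real.exp_add]; congr 1; field_simp; ring
      have e3 : cc ε lam * phi ε (y2 - y1 ^ 2) y1 (y1 - ε + r)
          = (Real.exp (2 - lam / ε) * Real.exp ((y1 - ε + r) / ε)) *
            ((ε ^ 2 - r ^ 2 + (y1 - (y1 - ε + r)) ^ 2) / (4 * ε ^ 2)) := by
        unfold cc phi; rw [hw]; ring
      rw [e3, he]
      field_simp
      ring
  · right; right; right
    obtain ⟨g1, g2⟩ := h5
    have : r ≤ ε - y1 := abs_le_of_sq_le_sq' (by nlinarith) (by linarith) |>.2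
    refine ⟨0, le_rfl, by linarith, ?_, by linarith, by linarith, by linarith, Or.inl rfl⟩
    unfold cc phi
    simp
    ring
  · exfalso
    push Not at h3
    apply h4
    refine ⟨h3, fun h => ?_⟩
    by_contra hc
    exact h5 ⟨h, by linarith⟩

theorem exists_r {ε y1 y2 : ℝ} (hy : (y1, y2) ∈ strip ε) :
    ∃ r : ℝ, 0 ≤ r ∧ r ^ 2 = ε ^ 2 - (y2 - y1 ^ 2) := by
  simp only [strip, mem_ofPred_eq] at hy
  exact ⟨Real.sqrt (ε ^ 2 - (y2 - y1 ^ 2)), Real.sqrt_nonneg _, Real.sq_sqrt (by linarith)⟩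

/-! ### Upper bounds for `B` -/

/-- In `Ω₄` and `Ω₅` the plane that gives `B` is the lowest among those of the exponential family
whose index is nonnegative and not smaller than the local maximizer `y - ε - r` of `phi`. -/
theorem phi_min {ε w y r b b' : ℝ} (hε : 0 < ε) (hr : r ^ 2 = ε ^ 2 - w) (hr0 : 0 ≤ r)
    (hb : y - ε + r ≤ b) (hb2 : b = 0 ∨ b = y - ε + r) (hb' : 0 ≤ b') (h : y - b' ≤ ε + r) :
    phi ε w y b ≤ phi ε w y b' := by
  rcases le_total b b' with h1 | h1
  · exact phi_mono hε hr hr0 hb h1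
  · rcases hb2 with h2 | h2
    · have : b' = b := by linarith
      rw [this]
    · exact phi_anti hε hr (by linarith) h1 h2.le

/-- The rational planes `b ∈ [lam - 2ε, lam)`, written with `ρ = 1 / (lam - b)`, bound `B` on the
whole right half of the strip. -/
theorem bound_rational {ε lam y1 y2 ρ : ℝ} (hε : 0 < ε) (hlam : 2 * ε < lam)
    (hy : (y1, y2) ∈ strip ε) (hy1 : 0 ≤ y1) (hρ : 1 / (2 * ε) ≤ ρ) :
    Bfun ε lam (y1, y2) ≤
      (y2 + lam ^ 2 - 2 * lam * y1) * ρ ^ 2 - 2 * (lam - y1) * ρ + 1 := by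
  obtain ⟨r, hr0, hr⟩ := exists_r hy
  have hyl : y1 ^ 2 ≤ y2 := hy.1
  have hρ0 : 0 < ρ := lt_of_lt_of_le (by positivity) hρ
  have hρ1 : 1 ≤ 2 * ε * ρ := by rwa [div_le_iff₀' (by positivity)] at hρ
  have hD : (lam - y1) ^ 2 ≤ y2 + lam ^ 2 - 2 * lam * y1 := by nlinarith
  set D := y2 + lam ^ 2 - 2 * lam * y1 with hDdef
  -- to the right of `lam` every plane of the family exceeds `1`
  have hright : lam ≤ y1 → 1 ≤ D * ρ ^ 2 - 2 * (lam - y1) * ρ + 1 := by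
    intro h
    have : 0 ≤ D * ρ ^ 2 := mul_nonneg (le_trans (sq_nonneg _) hD) (sq_nonneg _)
    have : 0 ≤ (y1 - lam) * ρ := mul_nonneg (by linarith) hρ0.le
    linarith
  -- above the tangent at `lam - ε` the plane `b = lam - 2ε` is the lowest
  have habove : 2 * ε * (lam - y1) ≤ D →
      D / (4 * ε ^ 2) - (lam - y1) / ε + 1 ≤ D * ρ ^ 2 - 2 * (lam - y1) * ρ + 1 := by
    intro h
    have hD0 : 0 ≤ D := le_trans (sq_nonneg _) hD
    have e1 : D * ρ ^ 2 - 2 * (lam - y1) * ρ + 1 - (D / (4 * ε ^ 2) - (lam - y1) / ε + 1)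
        = (2 * ε * ρ - 1) / (4 * ε ^ 2) *
          ((2 * ε * ρ - 1) * D + 2 * (D - 2 * ε * (lam - y1))) := by
      field_simp; ring
    have : 0 ≤ (2 * ε * ρ - 1) / (4 * ε ^ 2) *
          ((2 * ε * ρ - 1) * D + 2 * (D - 2 * ε * (lam - y1))) := by
      apply mul_nonneg
      · apply div_nonneg (by linarith) (by positivity)
      · have := mul_nonneg (sub_nonneg.2 hρ1) hD0
        linarith
    linarith
  rcases Bfun_cases hε hlam hy hy1 hr0 hr with
    ⟨hB, h1, h2⟩ | ⟨hB, h1, h2, h3, h4⟩ | ⟨hB, h1, h2⟩ | ⟨b, hb0, hb1, hB, h1, h2, h3, h4⟩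
  · rw [hB]; exact hright h1
  · rw [hB]
    rcases le_total lam y1 with h | h
    · refine le_trans ?_ (hright h)
      have : 0 ≤ (y2 - 2 * (lam + ε) * y1 + lam ^ 2 + 2 * ε * lam) / (8 * ε ^ 2) := by positivity
      linarith
    · have h5 : 2 * ε * (lam - y1) ≤ D := by rw [hDdef]; linarith
      refine le_trans ?_ (habove h5)
      have e1 : D / (4 * ε ^ 2) - (lam - y1) / ε + 1
          - (1 - (y2 - 2 * (lam + ε) * y1 + lam ^ 2 + 2 * ε * lam) / (8 * ε ^ 2))
          = 3 * (D - 2 * ε * (lam - y1)) / (8 * ε ^ 2) := by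
        rw [hDdef]; field_simp; ring
      have : 0 ≤ 3 * (D - 2 * ε * (lam - y1)) / (8 * ε ^ 2) := by
        apply div_nonneg (by linarith) (by positivity)
      linarith
  · rw [hB]
    have hDp : 0 < D := lt_of_lt_of_le (by apply pow_pos; linarith) hD
    rw [div_le_iff₀ hDp]
    have e1 : y2 - y1 ^ 2 = D - (lam - y1) ^ 2 := by rw [hDdef]; ring
    rw [e1]
    nlinarith [sq_nonneg (D * ρ - (lam - y1))]
  · have h5 : 2 * ε * (lam - y1) ≤ D := by rw [hDdef]; linarith
    refine le_trans ?_ (habove h5)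
    rw [hB]
    have h6 := phi_min hε hr hr0 h3 h4 (b' := lam - 2 * ε) (by linarith) (by linarith)
    have h7 := mul_le_mul_of_nonneg_left h6 (cc_pos hε lam).le
    refine h7.trans (le_of_eq ?_)
    rw [cc_phi hε, hDdef]; field_simp; ring

/-- An exponential plane bounds `B` at those points of the right half of the strip for which its
index `b` is not smaller than the local maximizer `y1 - ε - r` of `phi`. -/
theorem bound_exp {ε lam y1 y2 r b : ℝ} (hε : 0 < ε) (hlam : 2 * ε < lam)
    (hy : (y1, y2) ∈ strip ε) (hy1 : 0 ≤ y1) (hr0 : 0 ≤ r)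
    (hr : r ^ 2 = ε ^ 2 - (y2 - y1 ^ 2)) (hb0 : 0 ≤ b) (hb : b ≤ lam - 2 * ε)
    (h : y1 - b ≤ ε + r) :
    Bfun ε lam (y1, y2) ≤ cc ε lam * phi ε (y2 - y1 ^ 2) y1 b := by
  -- if the minimizer of `phi` lies beyond `lam - 2ε`, compare with the plane at `lam - 2ε`
  have far : lam - ε ≤ y1 + r →
      Bfun ε lam (y1, y2) ≤ cc ε lam * phi ε (y2 - y1 ^ 2) y1 b := by
    intro hf
    have h1 := bound_rational hε hlam hy hy1 (ρ := 1 / (2 * ε)) le_rfl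
    have h2 := phi_anti hε hr (y := y1) (b := b) (b' := lam - 2 * ε) (by linarith) hb (by linarith)
    have h3 := mul_le_mul_of_nonneg_left h2 (cc_pos hε lam).le
    refine le_trans (h1.trans (le_of_eq ?_)) h3
    rw [cc_phi hε]; field_simp; ring
  rcases Bfun_cases hε hlam hy hy1 hr0 hr with
    ⟨hB, h1, h2⟩ | ⟨hB, h1, h2, h3, h4⟩ | ⟨hB, h1, h2⟩ | ⟨b₀, hb0, hb1, hB, h1, h2, h3, h4⟩
  · exact far (by linarith)
  · exact far (by linarith)
  · apply far
    have : lam - ε - y1 ≤ r := (abs_le_of_sq_le_sq' (by nlinarith) hr0).2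
    linarith
  · rw [hB]
    exact mul_le_mul_of_nonneg_left (phi_min hε hr hr0 h3 h4 ‹_› h) (cc_pos hε lam).le

theorem Bfun_le_one {ε lam y1 y2 : ℝ} (hε : 0 < ε) (hlam : 2 * ε < lam)
    (hy : (y1, y2) ∈ strip ε) : Bfun ε lam (y1, y2) ≤ 1 := by
  wlog hy1 : 0 ≤ y1 generalizing y1
  · rw [← Bfun_neg]
    apply this _ (by linarith)
    simpa [strip] using hy
  obtain ⟨r, hr0, hr⟩ := exists_r hy
  have hyl : y1 ^ 2 ≤ y2 := hy.1
  rcases Bfun_cases hε hlam hy hy1 hr0 hr with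
    ⟨hB, h1, h2⟩ | ⟨hB, h1, h2, h3, h4⟩ | ⟨hB, h1, h2⟩ | ⟨b, hb0, hb1, hB, h1, h2, h3, h4⟩
  · exact hB.le
  · rw [hB]
    have : 0 ≤ (y2 - 2 * (lam + ε) * y1 + lam ^ 2 + 2 * ε * lam) / (8 * ε ^ 2) := by positivity
    linarith
  · rw [hB]
    apply div_le_one_of_le₀ <;> nlinarith [sq_nonneg (lam - y1)]
  · -- the factor `exp (b / ε)` is largest at `b = lam - 2ε`, and the other factor is at most `4ε²`
    rw [hB]
    have e1 : Real.exp (b / ε) ≤ Real.exp ((lam - 2 * ε) / ε) :=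
      Real.exp_le_exp.2 (div_le_div_of_nonneg_right hb1 hε.le)
    have e2 : cc ε lam * Real.exp ((lam - 2 * ε) / ε) = 1 / (4 * ε ^ 2) := by
      have := cc_phi hε lam 1 (lam - 2 * ε)
      simpa [phi] using this
    have hyu : y2 ≤ y1 ^ 2 + ε ^ 2 := hy.2
    have e3 : y2 - y1 ^ 2 + (y1 - b) ^ 2 ≤ 4 * ε ^ 2 := by
      have : (y1 - b) ^ 2 ≤ ε ^ 2 := by
        apply sq_le_sq'
        · rcases h4 with h4 | h4 <;> nlinarith
        · linarith
      nlinarith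
    have e4 : cc ε lam * phi ε (y2 - y1 ^ 2) y1 b
        ≤ cc ε lam * (Real.exp ((lam - 2 * ε) / ε) * (4 * ε ^ 2)) := by
      apply mul_le_mul_of_nonneg_left _ (cc_pos hε lam).le
      unfold phi
      exact mul_le_mul e1 e3 (by nlinarith [sq_nonneg (y1 - b)]) (Real.exp_pos _).le
    refine e4.trans (le_of_eq ?_)
    rw [← mul_assoc, e2]; field_simp

/-- A point with nonpositive abscissa that is visible from the right half of the strip lies below
the exponential plane of index `0`. -/
theorem bound_neg {ε lam x1 x2 y1 y2 : ℝ} (hε : 0 < ε) (hlam : 2 * ε < lam)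
    (hx : (x1, x2) ∈ strip ε) (hx1 : 0 ≤ x1)
    (hy : (y1, y2) ∈ strip ε) (hy1 : y1 ≤ 0) (hv : Vis ε x1 x2 y1 y2) :
    Bfun ε lam (y1, y2) ≤ cc ε lam * y2 := by
  obtain ⟨r, hr0, hr⟩ := exists_r hy
  have hxl : x1 ^ 2 ≤ x2 := hx.1
  rw [← Bfun_neg]
  have hr' : -y1 - 0 ≤ ε + r := by
    rcases le_total (-ε) y1 with h | h
    · linarith
    · have := vis_left (-ε) hv (by nlinarith) (by linarith) h
      have : -ε - y1 ≤ r := (abs_le_of_sq_le_sq' (by nlinarith) hr0).2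
      linarith
  have := bound_exp hε hlam (y1 := -y1) (y2 := y2) (b := 0) (by simpa [strip] using hy)
    (by linarith) hr0 (by rw [hr]; ring) le_rfl (by linarith) hr'
  refine this.trans (le_of_eq ?_)
  simp [phi]

set_option maxHeartbeats 1000000 in
/-- At a point of the right half of the strip, `B` has a supporting plane which dominates `B` at all
visible points. -/
theorem exists_support {ε lam x1 x2 : ℝ} (hε : 0 < ε) (hlam : 2 * ε < lam)
    (hx : (x1, x2) ∈ strip ε) (hx1 : 0 ≤ x1) :
    ∃ A0 A1 A2 : ℝ, Bfun ε lam (x1, x2) = A0 + A1 * x1 + A2 * x2 ∧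
      ∀ y1 y2 : ℝ, (y1, y2) ∈ strip ε → Vis ε x1 x2 y1 y2 →
        Bfun ε lam (y1, y2) ≤ A0 + A1 * y1 + A2 * y2 := by
  obtain ⟨r, hr0, hr⟩ := exists_r hx
  have hxl : x1 ^ 2 ≤ x2 := hx.1
  rcases Bfun_cases hε hlam hx hx1 hr0 hr with
    ⟨hB, h1, h2⟩ | ⟨hB, h1, h2, h3, h4⟩ | ⟨hB, h1, h2⟩ | ⟨b, hb0, hb1, hB, h1, h2, h3, h4⟩
  · refine ⟨1, 0, 0, by rw [hB]; ring, fun y1 y2 hy _ => ?_⟩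
    have := Bfun_le_one hε hlam hy
    linarith
  · refine ⟨1 - (lam ^ 2 + 2 * ε * lam) / (8 * ε ^ 2), 2 * (lam + ε) / (8 * ε ^ 2),
      -1 / (8 * ε ^ 2), by rw [hB]; ring, fun y1 y2 hy hv => ?_⟩
    have hyl : y1 ^ 2 ≤ y2 := hy.1
    have e0 : 1 - (lam ^ 2 + 2 * ε * lam) / (8 * ε ^ 2) + 2 * (lam + ε) / (8 * ε ^ 2) * y1
        + -1 / (8 * ε ^ 2) * y2
        = 1 - (y2 - 2 * (lam + ε) * y1 + lam ^ 2 + 2 * ε * lam) / (8 * ε ^ 2) := by ring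
    rw [e0]
    -- below the tangent at `lam + ε` the plane is at least `1`
    have low : y2 - 2 * (lam + ε) * y1 + lam ^ 2 + 2 * ε * lam ≤ 0 → Bfun ε lam (y1, y2) ≤
        1 - (y2 - 2 * (lam + ε) * y1 + lam ^ 2 + 2 * ε * lam) / (8 * ε ^ 2) := by
      intro h
      have := Bfun_le_one hε hlam hy
      have : (y2 - 2 * (lam + ε) * y1 + lam ^ 2 + 2 * ε * lam) / (8 * ε ^ 2) ≤ 0 :=
        div_nonpos_of_nonpos_of_nonneg h (by positivity)
      linarith
    -- below the tangent at `lam - ε` compare with the rational plane that is optimal at `y`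
    have low' : y2 - 2 * (lam - ε) * y1 + lam ^ 2 - 2 * ε * lam ≤ 0 → Bfun ε lam (y1, y2) ≤
        1 - (y2 - 2 * (lam + ε) * y1 + lam ^ 2 + 2 * ε * lam) / (8 * ε ^ 2) := by
      intro h
      rcases le_or_gt lam y1 with hl | hl
      · apply low; nlinarith
      have hy0 : 0 ≤ y1 := by
        by_contra hc
        push Not at hc
        nlinarith [mul_pos hε (sub_pos.2 hlam)]
      have ht : 0 < lam - y1 := by linarith
      have hD : (lam - y1) ^ 2 ≤ y2 + lam ^ 2 - 2 * lam * y1 := by nlinarith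
      have hT : y2 - 2 * (lam + ε) * y1 + lam ^ 2 + 2 * ε * lam
          = (y2 + lam ^ 2 - 2 * lam * y1) + 2 * ε * (lam - y1) := by ring
      have hD2 : y2 + lam ^ 2 - 2 * lam * y1 ≤ 2 * ε * (lam - y1) := by linarith
      have hc := fun ρ hρ => bound_rational hε hlam hy hy0 (ρ := ρ) hρ
      rw [hT]
      set D := y2 + lam ^ 2 - 2 * lam * y1
      set t := lam - y1
      have hDp : 0 < D := lt_of_lt_of_le (by positivity) hD
      have := hc (t / D) (by
        rw [div_le_div_iff₀ (by positivity) hDp]; linarith)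
      refine this.trans ?_
      have e1 : D * (t / D) ^ 2 - 2 * t * (t / D) + 1 = 1 - t ^ 2 / D := by field_simp; ring
      rw [e1]
      have : (D + 2 * ε * t) / (8 * ε ^ 2) ≤ t ^ 2 / D := by
        rw [div_le_div_iff₀ (by positivity) hDp]
        have h0 : 0 ≤ ε * t := by positivity
        nlinarith
      linarith
    rcases le_total (lam + ε) y1 with g1 | g1
    · apply low
      have := vis_right (lam + ε) hv (by nlinarith) h2 g1
      nlinarith
    rcases le_total y1 (lam - ε) with g2 | g2
    · apply low'
      have := vis_left (lam - ε) hv (by nlinarith) h1 g2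
      nlinarith
    obtain ⟨s, hs0, hs⟩ := exists_r hy
    rcases Bfun_cases hε hlam hy (by linarith) hs0 hs with
      ⟨hB', k1, k2⟩ | ⟨hB', -⟩ | ⟨hB', k1, k2⟩ | ⟨b, kb0, kb1, hB', k1, k2, k3, k4⟩
    · apply low
      rcases g1.lt_or_eq with g | g
      · exact k2 g
      · have := hy.2
        simp only at this
        subst g
        nlinarith
    · exact hB'.le
    · exact low' k1.le
    · apply low'
      have := hy.2
      simp only at this
      have : y1 = lam - ε := le_antisymm k1 g2
      subst this
      nlinarith
  · -- the rational plane that is optimal at `x`, with `ρ = t / D`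
    have ht : 0 < lam - x1 := by linarith
    have hD : (lam - x1) ^ 2 ≤ x2 + lam ^ 2 - 2 * lam * x1 := by nlinarith
    have hD2 : x2 + lam ^ 2 - 2 * lam * x1 ≤ 2 * ε * (lam - x1) := by linarith
    have hN : x2 - x1 ^ 2 = (x2 + lam ^ 2 - 2 * lam * x1) - (lam - x1) ^ 2 := by ring
    have hDp : 0 < x2 + lam ^ 2 - 2 * lam * x1 := lt_of_lt_of_le (by positivity) hD
    obtain ⟨ρ, hρd⟩ : ∃ ρ, ρ = (lam - x1) / (x2 + lam ^ 2 - 2 * lam * x1) := ⟨_, rfl⟩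
    have hρ : 1 / (2 * ε) ≤ ρ := by
      rw [hρd, div_le_div_iff₀ (by positivity) hDp]; linarith
    have hρ0 : 0 < ρ := lt_of_lt_of_le (by positivity) hρ
    refine ⟨lam ^ 2 * ρ ^ 2 - 2 * lam * ρ + 1, -2 * lam * ρ ^ 2 + 2 * ρ, ρ ^ 2, ?_,
      fun y1 y2 hy hv => ?_⟩
    · have e1 : lam ^ 2 * ρ ^ 2 - 2 * lam * ρ + 1 + (-2 * lam * ρ ^ 2 + 2 * ρ) * x1 + ρ ^ 2 * x2
          = (x2 + lam ^ 2 - 2 * lam * x1) * ρ ^ 2 - 2 * (lam - x1) * ρ + 1 := by ring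
      rw [e1, hB, hN, hρd]
      set D := x2 + lam ^ 2 - 2 * lam * x1
      field_simp
      ring
    · have e1 : lam ^ 2 * ρ ^ 2 - 2 * lam * ρ + 1 + (-2 * lam * ρ ^ 2 + 2 * ρ) * y1 + ρ ^ 2 * y2
          = (y2 + lam ^ 2 - 2 * lam * y1) * ρ ^ 2 - 2 * (lam - y1) * ρ + 1 := by ring
      rw [e1]
      rcases le_total 0 y1 with h0 | h0
      · exact bound_rational hε hlam hy h0 hρ
      · refine (bound_neg hε hlam hx hx1 hy h0 hv).trans ?_
        have hy20 : 0 ≤ y2 := le_trans (sq_nonneg y1) hy.1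
        have hρ1 : 1 ≤ 2 * ε * ρ := by rwa [div_le_iff₀' (by positivity)] at hρ
        have hcc : cc ε lam ≤ ρ ^ 2 := by
          have e2 : cc ε lam ≤ 1 / (4 * ε ^ 2) := by
            unfold cc
            apply div_le_div_of_nonneg_right _ (by positivity)
            rw [Real.exp_le_one_iff, sub_nonpos, le_div_iff₀ hε]
            exact hlam.le
          have e3 : 1 / (4 * ε ^ 2) ≤ ρ ^ 2 := by
            rw [div_le_iff₀ (by positivity)]; nlinarith
          exact e2.trans e3
        have m1 := mul_le_mul_of_nonneg_right hcc hy20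
        -- `lam * ρ ≥ 1`, so moving to the left only increases the plane
        have m2 : 1 ≤ lam * ρ := by nlinarith
        have m3 : 0 ≤ (lam * ρ - 1) * ρ * (-y1) := by
          apply mul_nonneg (mul_nonneg (by linarith) hρ0.le); linarith
        have m4 : (y2 + lam ^ 2 - 2 * lam * y1) * ρ ^ 2 - 2 * (lam - y1) * ρ + 1
            = ρ ^ 2 * y2 + (lam * ρ - 1) ^ 2 + 2 * ((lam * ρ - 1) * ρ * (-y1)) := by ring
        linarith [sq_nonneg (lam * ρ - 1)]
  · refine ⟨cc ε lam * Real.exp (b / ε) * b ^ 2, cc ε lam * Real.exp (b / ε) * (-2 * b),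
      cc ε lam * Real.exp (b / ε), by rw [hB]; unfold phi; ring, fun y1 y2 hy hv => ?_⟩
    have hy20 : 0 ≤ y2 := le_trans (sq_nonneg y1) hy.1
    have e1 : cc ε lam * Real.exp (b / ε) * b ^ 2 + cc ε lam * Real.exp (b / ε) * (-2 * b) * y1
        + cc ε lam * Real.exp (b / ε) * y2 = cc ε lam * phi ε (y2 - y1 ^ 2) y1 b := by
      unfold phi; ring
    rw [e1]
    rcases le_total 0 y1 with h0 | h0
    · obtain ⟨s, hs0, hs⟩ := exists_r hy
      apply bound_exp hε hlam hy h0 hs0 hs hb0 hb1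
      rcases le_total y1 (b + ε) with g | g
      · linarith
      · have := vis_right (b + ε) hv (by nlinarith) (by linarith) g
        have : y1 - (b + ε) ≤ s := (abs_le_of_sq_le_sq' (by nlinarith) hs0).2
        linarith
    · refine (bound_neg hε hlam hx hx1 hy h0 hv).trans ?_
      apply mul_le_mul_of_nonneg_left _ (cc_pos hε lam).le
      unfold phi
      have k1 : 1 ≤ Real.exp (b / ε) := Real.one_le_exp (by positivity)
      have k2 : y2 ≤ y2 - y1 ^ 2 + (y1 - b) ^ 2 := by nlinarith
      nlinarith

/-- For `λ > 2ε`, the candidate Bellman function `B` is locally concave on `Ω_ε`. -/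
theorem Bfun_locally_concave (ε lam : ℝ) (hε : 0 < ε) (hlam : 2 * ε < lam) :
    ∀ p ∈ strip ε, ∀ q ∈ strip ε,
      (∀ α : ℝ, α ∈ Icc (0:ℝ) 1 → α • p + (1 - α) • q ∈ strip ε) →
      ∀ α : ℝ, α ∈ Icc (0:ℝ) 1 →
        α * Bfun ε lam p + (1 - α) * Bfun ε lam q ≤
          Bfun ε lam (α • p + (1 - α) • q) := by
  rintro ⟨p1, p2⟩ hp ⟨q1, q2⟩ hq hseg α hα
  simp only [Prod.smul_mk, Prod.mk_add_mk, smul_eq_mul] at hseg ⊢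
  wlog hx1 : 0 ≤ α * p1 + (1 - α) * q1 generalizing p1 q1
  · have hneg : ∀ a b : ℝ, (a, b) ∈ strip ε → (-a, b) ∈ strip ε := by
      intro a b h; simpa [strip] using h
    have hlin : ∀ α : ℝ, α * -p1 + (1 - α) * -q1 = -(α * p1 + (1 - α) * q1) := by
      intro α; ring
    have := this (-p1) (hneg _ _ hp) (-q1) (hneg _ _ hq)
      (fun β hβ => by rw [hlin]; exact hneg _ _ (hseg β hβ)) (by rw [hlin]; linarith)
    rwa [hlin, Bfun_neg, Bfun_neg, Bfun_neg] at this
  have hx := hseg α hα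
  obtain ⟨hα0, hα1⟩ := hα
  obtain ⟨A0, A1, A2, hA, hL⟩ := exists_support hε hlam hx hx1
  have vp := hL p1 p2 hp (by
    intro τ h0 h1
    convert hseg (α + τ * (1 - α)) ⟨by nlinarith, by nlinarith⟩ using 2 <;> ring)
  have vq := hL q1 q2 hq (by
    intro τ h0 h1
    convert hseg (α - τ * α) ⟨by nlinarith, by nlinarith⟩ using 2 <;> ring)
  rw [hA]
  have m1 := mul_le_mul_of_nonneg_left vp hα0
  have m2 := mul_le_mul_of_nonneg_left vq (sub_nonneg.2 hα1)
  linarith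
end
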